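/- Let a, b, c, d be real numbers with 0 < a < b, c < 1, d > b, and 1 + d − b − c > 0. Then ₃F₂(a, b, c; a+1, d; 1) = [Γ(1-c)Γ(d)Γ(a+1)Γ(b-a) / (Γ(b)Γ(d-a)Γ(a-c+1))] − [a·Γ(1-c)Γ(d) / (Γ(b-c+1)Γ(d-b)(b-a))] · ₃F₂(b, b-d+1, b-a; b-a+1, b-c+1; 1). -/

import Mathlib

open Real MeasureTheory

/-- Pochhammer symbol `(a)_k = a (a+1) ⋯ (a+k-1)` for real `a`. -/
noncomputable def poch (a : ℝ) (k : ℕ) : ℝ := (ascPochhammer ℝ k).eval a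

/-- Gaussian hypergeometric function `₂F₁(a,b;c;z)`. -/
noncomputable def hyp2F1 (a b c z : ℝ) : ℝ :=
  ∑' k : ℕ, (poch a k * poch b k) / poch c k * z ^ k / (Nat.factorial k)

/-- Generalized hypergeometric function `₃F₂(a₁,a₂,a₃;b₁,b₂;z)`. -/
noncomputable def hyp3F2 (a₁ a₂ a₃ b₁ b₂ z : ℝ) : ℝ :=
  ∑' k : ℕ, (poch a₁ k * poch a₂ k * poch a₃ k) / (poch b₁ k * poch b₂ k) * z ^ k /
    (Nat.factorial k)

/-- Generalized hypergeometric function `₄F₃(a₁,a₂,a₃,a₄;b₁,b₂,b₃;z)`. -/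
noncomputable def hyp4F3 (a₁ a₂ a₃ a₄ b₁ b₂ b₃ z : ℝ) : ℝ :=
  ∑' k : ℕ, (poch a₁ k * poch a₂ k * poch a₃ k * poch a₄ k) /
    (poch b₁ k * poch b₂ k * poch b₃ k) * z ^ k / (Nat.factorial k)


open Set Filter Topology ProbabilityTheory

lemma hsc {f g : ℕ → ℝ} {a b : ℝ} (h : HasSum f a) (hf : ∀ k, g k = f k) (hb : b = a) :
    HasSum g b := by
  have : g = f := funext hf
  rw [this, hb]; exact h

lemma poch_succ' (a : ℝ) (k : ℕ) : poch a (k+1) = poch a k * (a + k) := by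
  simp [poch, ascPochhammer_succ_eval]

lemma poch_gamma (a : ℝ) (ha : 0 < a) (k : ℕ) :
    poch a k = Real.Gamma (a + k) / Real.Gamma a := by
  have h0 := (Real.Gamma_pos_of_pos ha).ne'
  induction k with
  | zero => simp [poch, h0]
  | succ k ih =>
    have : (a + k) ≠ 0 := by positivity
    rw [poch_succ', ih]
    push_cast
    rw [← add_assoc, Real.Gamma_add_one this]
    ring

/-- coefficients -/
noncomputable def cf (w : ℝ) (k : ℕ) : ℝ := poch (1 - w) k / (Nat.factorial k)

lemma hasSum_cf (w x : ℝ) (h0 : 0 < x) (h1 : x < 1) :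
    HasSum (fun k => cf w k * x ^ k) ((1 - x) ^ (w - 1)) := by
  have h := (Real.one_div_one_sub_rpow_hasFPowerSeriesOnBall_zero (1 - w)).hasSum (y := x)
    (by simp [Real.enorm_eq_ofReal_abs, abs_of_pos h0, h1])
  have h1x : 0 < 1 - x := by linarith
  refine hsc h (fun k => ?_) ?_
  · simp only [FormalMultilinearSeries.ofScalars_apply_eq, smul_eq_mul]
    congr 1
    rw [← Ring.multichoose_eq, cf, poch, ← Polynomial.ascPochhammer_smeval_eq_eval,
      ← Ring.factorial_nsmul_multichoose_eq_ascPochhammer]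
    have : (Nat.factorial k : ℝ) ≠ 0 := by positivity
    simp [nsmul_eq_mul]
    field_simp
  · rw [zero_add, one_div, ← Real.rpow_neg h1x.le]
    congr 1; ring

lemma poch_sign (c : ℝ) : ∃ (N : ℕ) (ε : ℝ), ∀ k, N ≤ k → |poch c k| = ε * poch c k := by
  obtain ⟨N, hN⟩ := exists_nat_ge (-c)
  rcases le_total 0 (poch c N) with h | h
  · refine ⟨N, 1, fun k hk => ?_⟩
    have : 0 ≤ poch c k := by
      induction k, hk using Nat.le_induction with
      | base => exact h
      | succ k hk ih =>
        have : (N:ℝ) ≤ k := by exact_mod_cast hk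
        rw [poch_succ']; exact mul_nonneg ih (by linarith)
    rw [abs_of_nonneg this, one_mul]
  · refine ⟨N, -1, fun k hk => ?_⟩
    have : poch c k ≤ 0 := by
      induction k, hk using Nat.le_induction with
      | base => exact h
      | succ k hk ih =>
        have : (N:ℝ) ≤ k := by exact_mod_cast hk
        rw [poch_succ']; exact mul_nonpos_of_nonpos_of_nonneg ih (by linarith)
    rw [abs_of_nonpos this]; ring

lemma hasSum_abs_cf (w : ℝ) : ∃ (N : ℕ) (ε : ℝ) (e : ℕ → ℝ), ∀ x : ℝ, 0 < x → x < 1 →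
    HasSum (fun k => |cf w k| * x ^ k)
      (ε * (1 - x) ^ (w - 1) + ∑ k ∈ Finset.range N, e k * x ^ k) := by
  obtain ⟨N, ε, h⟩ := poch_sign (1 - w)
  refine ⟨N, ε, fun k => |cf w k| - ε * cf w k, fun x h0 h1 => ?_⟩
  have h2 := (hasSum_cf w x h0 h1).mul_left ε
  have h3 : HasSum (fun k => (|cf w k| - ε * cf w k) * x ^ k)
      (∑ k ∈ Finset.range N, (|cf w k| - ε * cf w k) * x ^ k) := by
    apply hasSum_sum_of_ne_finset_zero
    intro k hk
    have hk : N ≤ k := by simpa using hk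
    have : |cf w k| - ε * cf w k = 0 := by
      rw [cf, abs_div, h k hk, abs_of_nonneg (by positivity : (0:ℝ) ≤ (Nat.factorial k : ℝ))]
      ring
    rw [this, zero_mul]
  refine hsc (h2.add h3) (fun k => ?_) rfl
  ring

/-- beta kernel -/
noncomputable def bk (r w x : ℝ) : ℝ := x ^ (r - 1) * (1 - x) ^ (w - 1)

/-- unit interval measure -/
noncomputable def mu : Measure ℝ := volume.restrict (Ioo 0 1)

instance : IsFiniteMeasure mu := by unfold mu; infer_instance

lemma ae_mu : ∀ᵐ x ∂mu, 0 < x ∧ x < 1 := by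
  unfold mu
  filter_upwards [ae_restrict_mem measurableSet_Ioo] with x hx using hx

lemma bk_meas (r w : ℝ) : Measurable (bk r w) := by unfold bk; fun_prop

lemma bk_integrable {r w : ℝ} (hr : 0 < r) (hw : 0 < w) : Integrable (bk r w) mu := by
  have h := Complex.betaIntegral_convergent (u := r) (v := w) (by simpa) (by simpa)
  rw [intervalIntegrable_iff_integrableOn_Ioo_of_le zero_le_one] at h
  have h2 := h.re
  refine Integrable.congr h2 ?_
  filter_upwards [ae_mu] with x hx
  have h1 : 0 ≤ 1 - x := by linarith [hx.2]
  have e1 : ((x:ℂ) ^ ((r:ℂ) - 1)) = ((x ^ (r-1) : ℝ) : ℂ) := by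
    rw [Complex.ofReal_cpow hx.1.le]; push_cast; rfl
  have e2 : ((1 - (x:ℂ)) ^ ((w:ℂ) - 1)) = (((1 - x) ^ (w-1) : ℝ) : ℂ) := by
    rw [Complex.ofReal_cpow h1]; push_cast; rfl
  simp only [e1, e2, ← Complex.ofReal_mul]
  simp [bk]

lemma bk_integral {r w : ℝ} (hr : 0 < r) (hw : 0 < w) : ∫ x, bk r w x ∂mu = beta r w := by
  rw [beta_eq_betaIntegralReal r w hr hw, Complex.betaIntegral,
    intervalIntegral.integral_of_le zero_le_one, integral_Ioc_eq_integral_Ioo]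
  have : ∫ (x : ℝ) in Ioo 0 1, (x:ℂ) ^ ((r:ℂ) - 1) * (1 - (x:ℂ)) ^ ((w:ℂ) - 1)
      = ∫ x, ((bk r w x : ℝ) : ℂ) ∂mu := by
    apply integral_congr_ae
    filter_upwards [ae_mu] with x hx
    have h1 : 0 ≤ 1 - x := by linarith [hx.2]
    rw [bk, Complex.ofReal_mul, Complex.ofReal_cpow hx.1.le, Complex.ofReal_cpow h1]; push_cast; rfl
  rw [this, integral_complex_ofReal, Complex.ofReal_re]

/-- the triangle -/
def TT : Set (ℝ × ℝ) := {z | z.1 < z.2}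

lemma TT_meas : MeasurableSet TT := measurableSet_lt measurable_fst measurable_snd

lemma ae_prod_mu : ∀ᵐ z ∂(mu.prod mu), (0 < z.1 ∧ z.1 < 1) ∧ (0 < z.2 ∧ z.2 < 1) := by
  have h1 := (Measure.quasiMeasurePreserving_fst (μ := mu) (ν := mu)).ae ae_mu
  have h2 := (Measure.quasiMeasurePreserving_snd (μ := mu) (ν := mu)).ae ae_mu
  filter_upwards [h1, h2] with z a b using ⟨a, b⟩

lemma term_integral {ρ p q : ℝ} (hρ : 0 < ρ) (hp : 0 < p) (hq : 0 < q) :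
    ∫ z in TT, bk ρ 1 z.1 * bk p q z.2 ∂(mu.prod mu) = beta (p + ρ) q / ρ := by
  have hI := (bk_integrable hρ one_pos).mul_prod (bk_integrable hp hq)
  rw [← integral_indicator TT_meas, integral_prod_symm _ (hI.indicator TT_meas),
    ← bk_integral (by linarith : 0 < p + ρ) hq, ← integral_div]
  apply integral_congr_ae
  filter_upwards [ae_mu] with t ht
  have e1 : ∀ s, TT.indicator (fun z : ℝ × ℝ => bk ρ 1 z.1 * bk p q z.2) (s, t)
      = (Iio t).indicator (fun s => s ^ (ρ - 1) * bk p q t) s := by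
    intro s
    by_cases h : s < t
    · rw [indicator_of_mem (by exact h), indicator_of_mem (by exact h)]; simp [bk]
    · rw [indicator_of_notMem (by exact h), indicator_of_notMem (by exact h)]
  simp_rw [e1]
  rw [integral_indicator measurableSet_Iio, mu, Measure.restrict_restrict measurableSet_Iio]
  have e2 : Iio t ∩ Ioo 0 1 = Ioo 0 t := by
    ext s; simp only [mem_inter_iff, mem_Iio, mem_Ioo]
    constructor
    · rintro ⟨a, b, c⟩; exact ⟨b, a⟩
    · rintro ⟨a, b⟩; exact ⟨b, a, b.trans ht.2⟩
  rw [e2, integral_mul_const, ← integral_Ioc_eq_integral_Ioo,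
    ← intervalIntegral.integral_of_le ht.1.le, integral_rpow (Or.inl (by linarith))]
  rw [sub_add_cancel, Real.zero_rpow hρ.ne', bk, bk, show p + ρ - 1 = ρ + (p - 1) by ring,
    Real.rpow_add ht.1 ρ (p-1)]
  ring

lemma bk_pow {r x : ℝ} (hx : 0 < x) (k : ℕ) : bk (r + k) 1 x = x ^ (r - 1) * x ^ k := by
  simp only [bk, sub_self, Real.rpow_zero, mul_one]
  rw [show r + k - 1 = (r - 1) + k by ring, Real.rpow_add hx, Real.rpow_natCast]

lemma bk_nonneg {r w x : ℝ} (hx : 0 < x ∧ x < 1) : 0 ≤ bk r w x :=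
  mul_nonneg (Real.rpow_nonneg hx.1.le _) (Real.rpow_nonneg (by linarith [hx.2]) _)

lemma main_sum {r w p q : ℝ} (hr : 0 < r) (hw : 0 < w) (hp : 0 < p) (hq : 0 < q) :
    HasSum (fun k : ℕ => cf w k * (beta (p + (r + k)) q / (r + k)))
      (∫ z in TT, bk r w z.1 * bk p q z.2 ∂(mu.prod mu)) := by
  obtain ⟨N, ε, e, hs⟩ := hasSum_abs_cf w
  have hae : ∀ᵐ z ∂((mu.prod mu).restrict TT), (0 < z.1 ∧ z.1 < 1) ∧ (0 < z.2 ∧ z.2 < 1) :=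
    ae_restrict_of_ae ae_prod_mu
  have hk : ∀ k : ℕ, 0 < r + k := fun k => by positivity
  have key : ∀ z : ℝ × ℝ, (0 < z.1 ∧ z.1 < 1) ∧ (0 < z.2 ∧ z.2 < 1) →
      HasSum (fun k : ℕ => |cf w k| * (bk (r + k) 1 z.1 * bk p q z.2))
        ((ε * bk r w z.1 + ∑ k ∈ Finset.range N, e k * bk (r + k) 1 z.1) * bk p q z.2) := by
    intro z hz
    have h := ((hs z.1 hz.1.1 hz.1.2).mul_left (z.1 ^ (r - 1))).mul_right (bk p q z.2)
    refine hsc h (fun k => ?_) ?_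
    · rw [bk_pow hz.1.1]; ring
    · congr 1
      rw [mul_add, Finset.mul_sum]
      congr 1
      · rw [bk]; ring
      · apply Finset.sum_congr rfl
        intro k _
        rw [bk_pow hz.1.1]; ring
  have H := hasSum_integral_of_dominated_convergence (μ := (mu.prod mu).restrict TT)
    (F := fun (k : ℕ) (z : ℝ × ℝ) => cf w k * (bk (r + k) 1 z.1 * bk p q z.2))
    (f := fun z => bk r w z.1 * bk p q z.2)
    (fun (k : ℕ) (z : ℝ × ℝ) => |cf w k| * (bk (r + k) 1 z.1 * bk p q z.2)) ?_ ?_ ?_ ?_ ?_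
  · refine hsc H (fun k => ?_) rfl
    rw [integral_const_mul, term_integral (hk k) hp hq]
  · intro k
    have h1 := bk_meas (r + k) 1
    have h2 := bk_meas p q
    exact Measurable.aestronglyMeasurable (by fun_prop)
  · intro k
    filter_upwards [hae] with z hz
    rw [norm_mul, Real.norm_eq_abs, Real.norm_eq_abs,
      abs_of_nonneg (mul_nonneg (bk_nonneg hz.1) (bk_nonneg hz.2))]
  · filter_upwards [hae] with z hz using (key z hz).summable
  · have : Integrable (fun z : ℝ × ℝ =>
        (ε * bk r w z.1 + ∑ k ∈ Finset.range N, e k * bk (r + k) 1 z.1) * bk p q z.2)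
        ((mu.prod mu).restrict TT) := by
      apply Integrable.restrict
      apply Integrable.mul_prod (f := fun x =>
        (ε * bk r w x + ∑ k ∈ Finset.range N, e k * bk (r + k) 1 x)) _ (bk_integrable hp hq)
      apply Integrable.add ((bk_integrable hr hw).const_mul _)
      apply integrable_finsetSum
      intro k _
      exact (bk_integrable (hk k) one_pos).const_mul _
    refine this.congr ?_
    filter_upwards [hae] with z hz using (key z hz).tsum_eq.symm
  · filter_upwards [hae] with z hz
    have h := ((hasSum_cf w z.1 hz.1.1 hz.1.2).mul_left (z.1 ^ (r - 1))).mul_right (bk p q z.2)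
    refine hsc h (fun k => ?_) rfl
    rw [bk_pow hz.1.1]; ring

lemma main_split {r w p q : ℝ} (hr : 0 < r) (hw : 0 < w) (hp : 0 < p) (hq : 0 < q) :
    (∫ z in TT, bk r w z.1 * bk p q z.2 ∂(mu.prod mu))
      + (∫ z in TT, bk p q z.1 * bk r w z.2 ∂(mu.prod mu)) = beta r w * beta p q := by
  have hI := (bk_integrable hr hw).mul_prod (bk_integrable hp hq)
  rw [← bk_integral hr hw, ← bk_integral hp hq, ← integral_prod_mul,
    ← integral_add_compl TT_meas hI]
  congr 1
  rw [← integral_indicator TT_meas, ← integral_indicator TT_meas.compl, ← integral_prod_swap]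
  apply integral_congr_ae
  have hne : ∀ᵐ z ∂(mu.prod mu), z.1 ≠ z.2 := by
    refine (Measure.ae_prod_iff_ae_ae (p := fun z : ℝ × ℝ => z.1 ≠ z.2)
      (measurableSet_eq_fun measurable_fst measurable_snd).compl).2 ?_
    refine Eventually.of_forall fun x => ?_
    have : ∀ᵐ y ∂mu, y ≠ x := by
      unfold mu; exact ae_restrict_of_ae (Measure.ae_ne volume x)
    filter_upwards [this] with y hy using hy.symm
  filter_upwards [hne] with z hz
  by_cases h : z.2 < z.1
  · rw [indicator_of_mem (by exact h), indicator_of_mem (by simp [TT, h.le])]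
    simp [mul_comm]
  · rw [indicator_of_notMem (by exact h), indicator_of_notMem]
    simp only [TT, mem_compl_iff, mem_ofPred_eq, not_not]
    exact lt_of_le_of_ne (not_lt.mp h) hz

lemma poch_ratio {a : ℝ} (ha : 0 < a) (k : ℕ) : poch a k / poch (a + 1) k = a / (a + k) := by
  have h : 0 < a + k := by positivity
  rw [poch_gamma a ha, poch_gamma (a+1) (by linarith), Real.Gamma_add_one ha.ne',
    show a + 1 + k = (a + k) + 1 by ring, Real.Gamma_add_one h.ne']
  have h1 := (Real.Gamma_pos_of_pos ha).ne'
  have h2 := (Real.Gamma_pos_of_pos h).ne'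
  field_simp

/-- integral evaluation of the series -/
lemma hyp_eq {r w p q : ℝ} (hr : 0 < r) (hw : 0 < w) (hp : 0 < p) (hq : 0 < q) :
    ∑' k : ℕ, (poch r k / poch (r + 1) k) * (poch (p + r) k / poch (p + r + q) k) * cf w k
      = r * Real.Gamma (p + r + q) / (Real.Gamma (p + r) * Real.Gamma q) *
      (∫ z in TT, bk r w z.1 * bk p q z.2 ∂(mu.prod mu)) := by
  have H := (main_sum hr hw hp hq).mul_left
    (r * Real.Gamma (p + r + q) / (Real.Gamma (p + r) * Real.Gamma q))
  rw [← H.tsum_eq]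
  congr 1
  ext k
  have h1 := (Real.Gamma_pos_of_pos (by positivity : 0 < p + r)).ne'
  have h2 := (Real.Gamma_pos_of_pos (by positivity : 0 < p + r + q)).ne'
  have h3 := (Real.Gamma_pos_of_pos hq).ne'
  have h4 := (Real.Gamma_pos_of_pos (by positivity : 0 < p + r + q + k)).ne'
  have h5 : 0 < r + k := by positivity
  rw [poch_ratio hr, poch_gamma (p+r) (by positivity), poch_gamma (p+r+q) (by positivity), beta,
    show p + (r + k) + q = p + r + q + k by ring, show p + (r + k) = p + r + k by ring]
  field_simp

theorem hyp3F2_transformation (a b c d : ℝ) (ha : 0 < a) (hab : a < b) (hc : c < 1)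
    (hdb : b < d) (hconv : 1 + d - b - c > 0) :
    hyp3F2 a b c (a + 1) d 1
    = Real.Gamma (1 - c) * Real.Gamma d * Real.Gamma (a + 1) * Real.Gamma (b - a) /
        (Real.Gamma b * Real.Gamma (d - a) * Real.Gamma (a - c + 1))
      - a * Real.Gamma (1 - c) * Real.Gamma d /
          (Real.Gamma (b - c + 1) * Real.Gamma (d - b) * (b - a)) *
          hyp3F2 b (b - d + 1) (b - a) (b - a + 1) (b - c + 1) 1 := by
  have hw : 0 < 1 - c := by linarith
  have hp : 0 < b - a := by linarith
  have hq : 0 < d - b := by linarith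
  have hb : 0 < b := by linarith
  have E1 := hyp_eq ha hw hp hq
  have E2 := hyp_eq hp hq ha hw
  have S := main_split ha hw hp hq
  have L1 : hyp3F2 a b c (a + 1) d 1 = ∑' k : ℕ, (poch a k / poch (a + 1) k) *
      (poch (b - a + a) k / poch (b - a + a + (d - b)) k) * cf (1 - c) k := by
    unfold hyp3F2
    congr 1; ext k
    rw [cf, show b - a + a = b by ring, show b + (d - b) = d by ring,
      show 1 - (1 - c) = c by ring, one_pow, mul_one]
    simp only [div_eq_mul_inv, mul_inv]; ring
  have L2 : hyp3F2 b (b - d + 1) (b - a) (b - a + 1) (b - c + 1) 1 =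
      ∑' k : ℕ, (poch (b - a) k / poch (b - a + 1) k) *
      (poch (a + (b - a)) k / poch (a + (b - a) + (1 - c)) k) * cf (d - b) k := by
    unfold hyp3F2
    congr 1; ext k
    rw [cf, show a + (b - a) = b by ring, show b + (1 - c) = b - c + 1 by ring,
      show 1 - (d - b) = b - d + 1 by ring, one_pow, mul_one]
    simp only [div_eq_mul_inv, mul_inv]; ring
  rw [L1, L2, E1, E2, eq_sub_of_add_eq S, beta, beta, show b - a + a = b by ring,
    show a + (b - a) = b by ring, show b + (d - b) = d by ring,
    show b + (1 - c) = b - c + 1 by ring, show a + (1 - c) = a - c + 1 by ring,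
    show b - a + (d - b) = d - a by ring, Real.Gamma_add_one ha.ne']
  have h1 := (Real.Gamma_pos_of_pos hb).ne'
  have h2 := (Real.Gamma_pos_of_pos hw).ne'
  have h3 := (Real.Gamma_pos_of_pos hq).ne'
  have h4 := (Real.Gamma_pos_of_pos (by linarith : 0 < b - c + 1)).ne'
  have h5 := (Real.Gamma_pos_of_pos (by linarith : 0 < a - c + 1)).ne'
  have h6 := (Real.Gamma_pos_of_pos (by linarith : 0 < d - a)).ne'
  have h7 := hp.ne'
  generalize (∫ z in TT, bk (b - a) (d - b) z.1 * bk a (1 - c) z.2 ∂(mu.prod mu)) = X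
  generalize Real.Gamma (b - c + 1) = g4 at *
  generalize Real.Gamma (a - c + 1) = g5 at *
  generalize Real.Gamma (d - a) = g6 at *
  generalize Real.Gamma (d - b) = g3 at *
  generalize Real.Gamma (1 - c) = g2 at *
  generalize b - a = p at *
  field_simp
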